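/- Every generalized derivation on a C*-algebra is bounded. That is, if A is a C*-algebra, d : A → A is a derivation, and δ : A → A is a linear map satisfying δ(xa) = δ(x)a + x d(a) for all x, a ∈ A, then δ is continuous. -/

import Mathlib

/-!
On the self-adjoint part, the real part `T` of a derivation is a Jordan derivation. Scale a
self-adjoint `a` so that `1` is a spectral value of largest modulus, and write `a = 2k - k²`, that
is, `1 - a = (1 - k)²`. Then `T a = (1 - k) T k + T k (1 - k)` is negligible in the directions in
which `k` acts almost as the identity, and there `a` attains its norm; so `‖a‖ ≤ ‖a + l T a‖` for
all real `l`, and the closed graph theorem makes such an everywhere defined operator continuous.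
Continuity of the generalized derivation `δ` then only has to be deduced from continuity of each
`a ↦ δ (x * a)`. This holds because every sequence with `∑ x n * star (x n)` convergent has the
form `x n = s * v n` with a single `s` and a bounded sequence `v`: take
`s = (∑ x n * star (x n)) ^ (1 / 4)`.
-/

open Filter Topology Metric
open scoped ComplexStarModule

theorem continuous_of_forall_norm_le_norm_sub_smul {E : Type*} [NormedAddCommGroup E]
    [NormedSpace ℝ E] [CompleteSpace E] (T : E →ₗ[ℝ] E)
    (hT : ∀ l : ℝ, 0 < l → ∀ x, ‖x‖ ≤ ‖x - l • T x‖) : Continuous T := by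
  refine T.continuous_of_seq_closed_graph fun u x y hu hTu ↦ ?_
  set w := y - T x
  have hv : Tendsto (fun n ↦ u n - x) atTop (𝓝 0) := by simpa using hu.sub_const x
  have hTv : Tendsto (fun n ↦ T (u n - x)) atTop (𝓝 w) := by simpa using! hTu.sub_const (T x)
  have norm_w_le (l : ℝ) (hl : 0 < l) : ‖w‖ ≤ l * ‖T w‖ := by
    have hlim : ‖0 + l • w‖ ≤ ‖0 + l • w - l • (w + l • T w)‖ := by
      refine le_of_tendsto_of_tendsto' (hv.add_const _).norm
        ((hv.add_const _).sub ((hTv.add_const _).const_smul l)).norm fun n ↦ ?_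
      simpa using hT l hl (u n - x + l • w)
    have hcancel : 0 + l • w - l • (w + l • T w) = -(l • l • T w) := by
      rw [smul_add]; abel
    rw [hcancel, zero_add, norm_neg, norm_smul, norm_smul, norm_smul,
      Real.norm_of_nonneg hl.le] at hlim
    exact le_of_mul_le_mul_left hlim hl
  have hzero : Tendsto (fun l : ℝ ↦ l * ‖T w‖) (𝓝[>] 0) (𝓝 0) := by
    simpa using ((continuous_mul_const ‖T w‖).tendsto 0).mono_left nhdsWithin_le_nhds
  have hw : ‖w‖ ≤ 0 := ge_of_tendsto hzero (eventually_mem_nhdsWithin.mono norm_w_le)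
  exact sub_eq_zero.1 (norm_le_zero_iff.1 hw)

section SelfAdjoint

theorem completeSpace_selfAdjoint {A : Type*} [NormedAddCommGroup A] [StarAddMonoid A]
    [NormedStarGroup A] [CompleteSpace A] : CompleteSpace (selfAdjoint A) :=
  (isClosed_eq continuous_star continuous_id : IsClosed {a : A | star a = a}).completeSpace_coe

theorem continuous_of_continuous_comp_selfAdjoint {A E : Type*} [SeminormedAddCommGroup A]
    [StarAddMonoid A] [NormedSpace ℂ A] [StarModule ℂ A] [NormedStarGroup A] [AddCommGroup E]
    [Module ℂ E] [TopologicalSpace E] [ContinuousAdd E] [ContinuousConstSMul ℂ E]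
    (f : A →ₗ[ℂ] E) (hf : Continuous fun h : selfAdjoint A ↦ f h) : Continuous f := by
  have hℜ : Continuous (ℜ : A → selfAdjoint A) :=
    AddMonoidHomClass.continuous_of_bound realPart 1 fun a ↦ by simpa using realPart.norm_le a
  have hℑ : Continuous (ℑ : A → selfAdjoint A) :=
    AddMonoidHomClass.continuous_of_bound imaginaryPart 1 fun a ↦ by
      simpa using imaginaryPart.norm_le a
  have hf_eq : ⇑f = fun a ↦ f (ℜ a) + Complex.I • f (ℑ a) := by
    funext a
    rw [← map_smul, ← map_add, realPart_add_I_smul_imaginaryPart]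
  rw [hf_eq]
  exact (hf.comp hℜ).add ((hf.comp hℑ).const_smul Complex.I)

theorem realPart_mul_add_mul {A : Type*} [NonUnitalRing A] [StarRing A] [Module ℂ A]
    [StarModule ℂ A] [IsScalarTower ℂ A A] [SMulCommClass ℂ A A] {k : A} (hk : IsSelfAdjoint k)
    (b : A) : (ℜ (b * k + k * b) : A) = ℜ b * k + k * ℜ b := by
  simp only [realPart_apply_coe, star_add, star_mul, hk.star_eq, smul_mul_assoc, mul_smul_comm,
    add_mul, mul_add, smul_add]
  abel

end SelfAdjoint

section Derivation

theorem exists_continuous_bump_abs_sub_mul_le {μ ε : ℝ} (hμ : μ ≠ 0) (hε : 0 < ε) :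
    ∃ g : ℝ → ℝ, Continuous g ∧ g 0 = 0 ∧ g μ = 1 ∧
      ∀ t, 0 ≤ g t ∧ g t ≤ 1 ∧ |t - μ| * g t ≤ ε := by
  -- The bump has width at most `|μ|` so that it vanishes at `0`.
  set r := min ε |μ|
  have hr : 0 < r := lt_min hε (abs_pos.2 hμ)
  have hle_one (t : ℝ) : max 0 (1 - |t - μ| / r) ≤ 1 :=
    max_le zero_le_one (sub_le_self _ (by positivity))
  refine ⟨fun t ↦ max 0 (1 - |t - μ| / r), by fun_prop, ?_, by simp,
    fun t ↦ ⟨le_max_left _ _, hle_one t, ?_⟩⟩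
  · have : 1 ≤ |μ| / r := (one_le_div hr).2 (min_le_right _ _)
    simpa using this
  · rcases le_total |t - μ| r with hnear | hfar
    · exact (mul_le_of_le_one_right (abs_nonneg _) (hle_one t)).trans
        (hnear.trans (min_le_left _ _))
    · simpa [max_eq_left (sub_nonpos.2 ((one_le_div hr).2 hfar))] using hε.le

variable {A : Type*} [NonUnitalCStarAlgebra A]

theorem exists_norm_eq_one_norm_mul_sub_smul_le {a : A} (ha : IsSelfAdjoint a) {μ : ℝ}
    (hμ : μ ∈ quasispectrum ℝ a) (hμ0 : μ ≠ 0) {ε : ℝ} (hε : 0 < ε) :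
    ∃ c : A, ‖c‖ = 1 ∧ ‖a * c - μ • c‖ ≤ ε := by
  obtain ⟨g, hg_cont, hg_zero, hgμ, hg⟩ := exists_continuous_bump_abs_sub_mul_le hμ0 hε
  refine ⟨cfcₙ g a, le_antisymm (norm_cfcₙ_le fun t _ ↦ ?_) ?_, ?_⟩
  · rw [Real.norm_of_nonneg (hg t).1]
    exact (hg t).2.1
  · simpa [hgμ] using norm_apply_le_norm_cfcₙ g a hμ
  · have hcfc : a * cfcₙ g a - μ • cfcₙ g a = cfcₙ (fun t ↦ t * g t - μ * g t) a := by
      rw [cfcₙ_sub (fun t ↦ t * g t) (fun t ↦ μ * g t) a, cfcₙ_mul (fun t ↦ t) g a,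
        cfcₙ_const_mul μ g a, cfcₙ_id' ℝ a]
    rw [hcfc]
    refine norm_cfcₙ_le fun t _ ↦ ?_
    rw [← sub_mul, norm_mul, Real.norm_of_nonneg (hg t).1]
    exact (hg t).2.2

theorem one_le_norm_mul_self_add {k : A} (hk : IsSelfAdjoint k) (hk1 : 1 ∈ quasispectrum ℝ k)
    (w : A) : 1 ≤ ‖k * k + (w - k * w) + (w - w * k)‖ := by
  set z := k * k + (w - k * w) + (w - w * k)
  have one_sub_sq_le (ε : ℝ) (hε : ε ∈ Set.Ioo (0 : ℝ) 1) :
      (1 - ε) ^ 2 ≤ ‖z‖ + 2 * (ε * ‖w‖) := by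
    obtain ⟨c, hc, hcε⟩ := exists_norm_eq_one_norm_mul_sub_smul_le hk hk1 one_ne_zero hε.1
    rw [one_smul] at hcε
    set e := k * c - c
    have hkc : 1 - ε ≤ ‖k * c‖ := by
      have := norm_le_norm_add_norm_sub (k * c) c
      rw [hc] at this
      linarith
    have hz : star (k * c) * (k * c) = star c * z * c + star e * w * c + star c * w * e := by
      simp only [z, e, star_mul, star_sub, hk.star_eq]
      noncomm_ring
    calc (1 - ε) ^ 2 ≤ ‖k * c‖ ^ 2 := by gcongr; linarith [hε.2]
      _ = ‖star c * z * c + star e * w * c + star c * w * e‖ := by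
        rw [← hz, CStarRing.norm_star_mul_self, sq]
      _ ≤ ‖c‖ * ‖z‖ * ‖c‖ + ‖e‖ * ‖w‖ * ‖c‖ + ‖c‖ * ‖w‖ * ‖e‖ := by
        simpa only [norm_star] using norm_add₃_le.trans
          (add_le_add_three (norm_mul₃_le (a := star c)) (norm_mul₃_le (a := star e))
            (norm_mul₃_le (a := star c)))
      _ = ‖z‖ + 2 * (‖e‖ * ‖w‖) := by rw [hc]; ring
      _ ≤ ‖z‖ + 2 * (ε * ‖w‖) := by gcongr
  have hleft : Tendsto (fun ε : ℝ ↦ (1 - ε) ^ 2) (𝓝[>] 0) (𝓝 1) := by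
    have : Continuous fun ε : ℝ ↦ (1 - ε) ^ 2 := by fun_prop
    simpa using (this.tendsto 0).mono_left nhdsWithin_le_nhds
  have hright : Tendsto (fun ε : ℝ ↦ ‖z‖ + 2 * (ε * ‖w‖)) (𝓝[>] 0) (𝓝 ‖z‖) := by
    have : Continuous fun ε : ℝ ↦ ‖z‖ + 2 * (ε * ‖w‖) := by fun_prop
    simpa using (this.tendsto 0).mono_left nhdsWithin_le_nhds
  exact le_of_tendsto_of_tendsto hleft hright
    (eventually_of_mem (Ioo_mem_nhdsGT one_pos) one_sub_sq_le)

theorem exists_eq_smul_add_self_sub_mul_self {a : A} (ha : IsSelfAdjoint a) (ha0 : a ≠ 0) :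
    ∃ (μ : ℝ) (k : A), IsSelfAdjoint k ∧ 1 ∈ quasispectrum ℝ k ∧ ‖μ‖ = ‖a‖ ∧
      a = μ • (k + k - k * k) := by
  obtain ⟨⟨μ, hμ, hμa⟩, hmax⟩ :=
    NonUnitalIsometricContinuousFunctionalCalculus.isGreatest_norm_quasispectrum (𝕜 := ℝ) a ha
  have hμ0 : μ ≠ 0 := by
    rintro rfl
    exact ha0 (by simpa [eq_comm] using hμa)
  have div_le_one (t : ℝ) (ht : t ∈ quasispectrum ℝ a) : t / μ ≤ 1 := by
    have : ‖t‖ ≤ ‖μ‖ := (hmax ⟨t, ht, rfl⟩).trans_eq hμa.symm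
    refine (le_abs_self _).trans ?_
    rw [abs_div]
    exact div_le_one_of_le₀ this (abs_nonneg _)
  set f : ℝ → ℝ := fun t ↦ 1 - √(1 - t / μ) with hf
  have : Continuous f := by fun_prop
  have : f 0 = 0 := by simp [hf]
  refine ⟨μ, cfcₙ f a, cfcₙ_predicate f a, ?_, hμa, ?_⟩
  · rw [cfcₙ_map_quasispectrum f a]
    exact ⟨μ, hμ, by simp [hf, hμ0]⟩
  · have hcfc : μ • (cfcₙ f a + cfcₙ f a - cfcₙ f a * cfcₙ f a) =
        cfcₙ (fun t ↦ μ * (f t + f t - f t * f t)) a := by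
      rw [cfcₙ_const_mul μ (fun t ↦ f t + f t - f t * f t) a,
        cfcₙ_sub (fun t ↦ f t + f t) (fun t ↦ f t * f t) a, cfcₙ_add f f a, cfcₙ_mul f f a]
    rw [hcfc]
    conv_lhs => rw [← cfcₙ_id' ℝ a]
    refine cfcₙ_congr fun t ht ↦ ?_
    have hsqrt := Real.mul_self_sqrt (sub_nonneg.2 (div_le_one t ht))
    have hcancel : μ * (t / μ) = t := mul_div_cancel₀ t hμ0
    simp only [hf]
    linear_combination μ * hsqrt - hcancel

theorem norm_le_norm_add_smul_of_jordan_derivation (T : A →ₗ[ℝ] A)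
    (hT : ∀ k, IsSelfAdjoint k → T (k * k) = T k * k + k * T k)
    {a : A} (ha : IsSelfAdjoint a) (l : ℝ) : ‖a‖ ≤ ‖a + l • T a‖ := by
  rcases eq_or_ne a 0 with rfl | ha0
  · simp
  obtain ⟨μ, k, hk, hk1, hμ, rfl⟩ := exists_eq_smul_add_self_sub_mul_self ha ha0
  set w := k + l • T k with hw
  have hsum : μ • (k + k - k * k) + l • T (μ • (k + k - k * k)) =
      μ • (k * k + (w - k * w) + (w - w * k)) := by
    rw [map_smul, smul_comm l μ, ← smul_add, map_sub, map_add, hT k hk, hw]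
    congr 1
    simp only [mul_add, add_mul, smul_add, smul_sub, mul_smul_comm, smul_mul_assoc]
    abel
  rw [hsum, ← hμ, norm_smul]
  exact le_mul_of_one_le_right (norm_nonneg μ) (one_le_norm_mul_self_add hk hk1 w)

theorem continuous_realPart_of_jordan_derivation (d : A →ₗ[ℂ] A)
    (hd : ∀ a, d (a * a) = d a * a + a * d a) :
    Continuous fun h : selfAdjoint A ↦ ℜ (d h) := by
  have := completeSpace_selfAdjoint (A := A)
  let T : A →ₗ[ℝ] selfAdjoint A := realPart ∘ₗ d.restrictScalars ℝ
  have hT (k : A) (hk : IsSelfAdjoint k) : (T (k * k) : A) = T k * k + k * T k := by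
    simpa [T, hd] using realPart_mul_add_mul hk (d k)
  refine continuous_of_forall_norm_le_norm_sub_smul
    (T ∘ₗ (selfAdjoint.submodule ℝ A).subtype) fun l _ h ↦ ?_
  have := norm_le_norm_add_smul_of_jordan_derivation
    ((selfAdjoint.submodule ℝ A).subtype ∘ₗ T) hT h.2 (-l)
  rwa [neg_smul, ← sub_eq_add_neg] at this

theorem continuous_of_jordan_derivation (d : A →ₗ[ℂ] A) (hd : ∀ a, d (a * a) = d a * a + a * d a) :
    Continuous d := by
  have hre := continuous_realPart_of_jordan_derivation d hd
  have him : Continuous fun h : selfAdjoint A ↦ ℑ (d h) := by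
    have := continuous_realPart_of_jordan_derivation (Complex.I • d) fun a ↦ by
      simp [hd, smul_mul_assoc, mul_smul_comm]
    simpa [Function.comp_def] using continuous_neg.comp this
  have hsum : Continuous fun h : selfAdjoint A ↦ (ℜ (d h) : A) + Complex.I • (ℑ (d h) : A) :=
    (continuous_subtype_val.comp hre).add
      ((continuous_subtype_val.comp him).const_smul Complex.I)
  refine continuous_of_continuous_comp_selfAdjoint d ?_
  simpa only [realPart_add_I_smul_imaginaryPart] using hsum

end Derivation

section Factorization

variable {A : Type*} [NonUnitalCStarAlgebra A]

theorem exists_tendsto_mul_mul_self {s : A} (hs : IsSelfAdjoint s) :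
    ∃ m : ℕ → A, Tendsto (fun n ↦ m n * (s * s)) atTop (𝓝 s) := by
  let r (n : ℕ) : ℝ := 1 / ((n : ℝ) + 1)
  have hr (n : ℕ) : 0 < r n := Nat.one_div_pos_of_nat
  let g (n : ℕ) (t : ℝ) : ℝ := t / (t ^ 2 + r n ^ 2)
  have hden (n : ℕ) (t : ℝ) : 0 < t ^ 2 + r n ^ 2 := by have := hr n; positivity
  have hg_cont (n : ℕ) : Continuous (g n) :=
    .div₀ (by fun_prop) (by fun_prop) fun t ↦ (hden n t).ne'
  have (n : ℕ) : g n 0 = 0 := by simp [g]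
  have hg_near (n : ℕ) (t : ℝ) : |g n t * (t * t) - t| ≤ r n := by
    have hdiff : g n t * (t * t) - t = -(r n * (t * r n / (t ^ 2 + r n ^ 2))) := by
      have := (hden n t).ne'
      simp only [g]
      field_simp
      ring
    have hfrac : |t * r n / (t ^ 2 + r n ^ 2)| ≤ 1 := by
      rw [abs_div, abs_of_pos (hden n t), div_le_one (hden n t), abs_mul, ← sq_abs t,
        ← sq_abs (r n)]
      nlinarith [two_mul_le_add_sq |t| |r n|, abs_nonneg t, abs_nonneg (r n)]
    rw [hdiff, abs_neg, abs_mul, abs_of_pos (hr n)]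
    exact mul_le_of_le_one_right (hr n).le hfrac
  refine ⟨fun n ↦ cfcₙ (g n) s, tendsto_iff_norm_sub_tendsto_zero.2 <|
    squeeze_zero (fun _ ↦ norm_nonneg _) (fun n ↦ ?_) tendsto_one_div_add_atTop_nhds_zero_nat⟩
  have hcfc : cfcₙ (g n) s * (s * s) - s = cfcₙ (fun t ↦ g n t * (t * t) - t) s := by
    have hc := hg_cont n
    rw [cfcₙ_sub (fun t ↦ g n t * (t * t)) (fun t ↦ t) s, cfcₙ_mul (g n) (fun t ↦ t * t) s,
      cfcₙ_mul (fun t ↦ t) (fun t ↦ t) s, cfcₙ_id' ℝ s]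
  rw [hcfc]
  exact norm_cfcₙ_le fun t _ ↦ hg_near n t

section Order

variable [PartialOrder A] [StarOrderedRing A] {x y : A}

theorem norm_le_norm_of_mul_star_le (h : x * star x ≤ y * star y) : ‖x‖ ≤ ‖y‖ := by
  have := CStarAlgebra.norm_le_norm_of_nonneg_of_le (mul_star_self_nonneg x) h
  rw [CStarRing.norm_self_mul_star, CStarRing.norm_self_mul_star] at this
  exact (mul_self_le_mul_self_iff (norm_nonneg x) (norm_nonneg y)).2 this

theorem norm_mul_le_norm_mul_of_mul_star_le (h : x * star x ≤ y * star y) (m : A) :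
    ‖m * x‖ ≤ ‖m * y‖ := by
  refine norm_le_norm_of_mul_star_le ?_
  simpa only [star_mul, mul_assoc] using star_right_conjugate_le_conjugate h m

theorem norm_sub_mul_le_norm_sub_mul_of_mul_star_le (h : x * star x ≤ y * star y) (m : A) :
    ‖x - m * x‖ ≤ ‖y - m * y‖ := by
  obtain ⟨b, hb⟩ := CStarAlgebra.nonneg_iff_eq_star_mul_self.1 (sub_nonneg.2 h)
  refine norm_le_norm_of_mul_star_le (sub_nonneg.1 ?_)
  have hconj : (y - m * y) * star (y - m * y) - (x - m * x) * star (x - m * x) =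
      star (b - b * star m) * (b - b * star m) := by
    calc _ = (y * star y - x * star x) - m * (y * star y - x * star x)
          - (y * star y - x * star x) * star m + m * (y * star y - x * star x) * star m := by
          simp only [star_sub, star_mul]
          noncomm_ring
      _ = _ := by
          rw [hb]
          simp only [star_sub, star_mul, star_star]
          noncomm_ring
  exact hconj ▸ star_mul_self_nonneg _

theorem exists_eq_mul_of_mul_star_le_of_tendsto {s w : A}
    (h : x * star x ≤ s * w * star (s * w)) {m : ℕ → A}
    (hm : Tendsto (fun n ↦ m n * (s * w)) atTop (𝓝 w)) :
    ∃ v, x = s * v ∧ ‖v‖ ≤ ‖w‖ := by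
  have hcauchy : CauchySeq fun n ↦ m n * x := by
    refine Metric.cauchySeq_iff.2 fun ε hε ↦ ?_
    obtain ⟨N, hN⟩ := Metric.cauchySeq_iff.1 hm.cauchySeq ε hε
    refine ⟨N, fun i hi j hj ↦ lt_of_le_of_lt ?_ (hN i hi j hj)⟩
    simpa only [dist_eq_norm, sub_mul] using norm_mul_le_norm_mul_of_mul_star_le h (m i - m j)
  obtain ⟨v, hv⟩ := cauchySeq_tendsto_of_complete hcauchy
  refine ⟨v, ?_, le_of_tendsto_of_tendsto' hv.norm hm.norm fun n ↦
    norm_mul_le_norm_mul_of_mul_star_le h (m n)⟩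
  have hsw : Tendsto (fun n ↦ ‖s * w - s * m n * (s * w)‖) atTop (𝓝 0) := by
    simpa [mul_assoc] using ((hm.const_mul s).const_sub (s * w)).norm
  have hx : Tendsto (fun n ↦ x - s * (m n * x)) atTop (𝓝 0) :=
    squeeze_zero_norm (fun n ↦ by
      simpa [mul_assoc] using norm_sub_mul_le_norm_sub_mul_of_mul_star_le h (s * m n)) hsw
  exact sub_eq_zero.1 (tendsto_nhds_unique ((hv.const_mul s).const_sub x) hx)

end Order

theorem exists_forall_eq_mul_of_summable {ι : Type*} {x : ι → A}
    (hx : Summable fun i ↦ x i * star (x i)) :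
    ∃ (s : A) (v : ι → A), ∀ i, x i = s * v i ∧ ‖v i‖ ≤ ‖s‖ := by
  let _ := CStarAlgebra.spectralOrder A
  have _ := CStarAlgebra.spectralOrderedRing A
  set c := ∑' i, x i * star (x i)
  have hc : 0 ≤ c := tsum_nonneg fun i ↦ mul_star_self_nonneg (x i)
  set s := CFC.sqrt (CFC.sqrt c)
  have hs : IsSelfAdjoint s := .of_nonneg (CFC.sqrt_nonneg _)
  have hsc : s * s * star (s * s) = c := by
    rw [star_mul, hs.star_eq, CFC.sqrt_mul_sqrt_self _ (CFC.sqrt_nonneg c),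
      CFC.sqrt_mul_sqrt_self c hc]
  have hle (i : ι) : x i * star (x i) ≤ s * s * star (s * s) :=
    hsc ▸ hx.le_tsum i fun j _ ↦ mul_star_self_nonneg (x j)
  obtain ⟨m, hm⟩ := exists_tendsto_mul_mul_self hs
  choose v hv using fun i ↦ exists_eq_mul_of_mul_star_le_of_tendsto (hle i) hm
  exact ⟨s, v, hv⟩

theorem continuous_of_forall_continuous_mul_left {E : Type*} [NormedAddCommGroup E]
    [NormedSpace ℝ E] (T : A →+ E) (hT : ∀ x, Continuous fun a ↦ T (x * a)) :
    Continuous T := by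
  by_contra hcont
  have hunbdd (n : ℕ) : ∃ x, ‖x‖ < (1 / 2 : ℝ) ^ n ∧ n < ‖T x‖ := by
    by_contra! hbdd
    refine hcont (T.continuous_of_isBounded_nhds_zero (ball_mem_nhds 0 (ε := (1 / 2) ^ n)
      (by positivity)) (isBounded_iff_forall_norm_le.2 ⟨n, ?_⟩))
    rintro _ ⟨x, hx, rfl⟩
    exact hbdd x (by simpa using hx)
  choose x hx hTx using hunbdd
  have hsum : Summable fun n ↦ x n * star (x n) := by
    refine .of_norm_bounded summable_geometric_two fun n ↦ ?_
    have hle_one : ‖x n‖ ≤ 1 := (hx n).le.trans (pow_le_one₀ (by norm_num) (by norm_num))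
    rw [CStarRing.norm_self_mul_star]
    exact (mul_le_of_le_one_right (norm_nonneg _) hle_one).trans (hx n).le
  obtain ⟨s, v, hv⟩ := exists_forall_eq_mul_of_summable hsum
  let Ts : A →L[ℝ] E := (T.comp (AddMonoidHom.mulLeft s)).toRealLinearMap (hT s)
  obtain ⟨n, hn⟩ := exists_nat_gt (‖Ts‖ * ‖s‖)
  have hTxn : ‖T (x n)‖ ≤ ‖Ts‖ * ‖s‖ :=
    calc ‖T (x n)‖ = ‖Ts (v n)‖ := by rw [(hv n).1]; rfl
      _ ≤ ‖Ts‖ * ‖s‖ := Ts.le_opNorm_of_le (hv n).2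
  linarith [hTx n]

end Factorization

/-- Every generalized derivation on a C*-algebra is bounded: if `A` is a
C*-algebra, `d : A → A` is a derivation and `δ : A → A` is a linear map with
`δ (x * a) = δ x * a + x * d a` for all `x a`, then `δ` is continuous. -/
theorem generalized_derivation_continuous_of_cstar
    {A : Type*} [NonUnitalCStarAlgebra A]
    (d : A →ₗ[ℂ] A) (hd : ∀ a b : A, d (a * b) = d a * b + a * d b)
    (δ : A →ₗ[ℂ] A) (hδ : ∀ x a : A, δ (x * a) = δ x * a + x * d a) :
    Continuous δ := by
  have hd_cont : Continuous d := continuous_of_jordan_derivation d fun a ↦ hd a a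
  refine continuous_of_forall_continuous_mul_left δ.toAddMonoidHom fun x ↦ ?_
  simp only [LinearMap.toAddMonoidHom_coe, hδ]
  fun_prop
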